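/- Let φ = f ∘ s⁻¹ : A → B and ψ = g ∘ t⁻¹ : B → C be morphisms in K^b(A)/𝔻, where A, B, C are objects of A, the domains L of s and T of t are complexes concentrated in degrees 0 and 1, f ∈ K^b(A)(L, B), g ∈ K^b(A)(T, C), and the cones of s : L → A and t : T → B lie in 𝔻. Let LT be the complex with LT⁰ = L⁰ ⊕ T⁰, LT¹ = L¹ ⊕ T¹ ⊕ B, and differential given by the matrix with rows (d⁰_L, 0), (0, d⁰_T), (f⁰, −t⁰). Then for the morphisms q ∈ K^b(A)(LT, A) with degree-0 component (s⁰, 0) and r ∈ K^b(A)(LT, C) with degree-0 component (0, g⁰), the cone of q lies in 𝔻 and ψ ∘ φ = r ∘ q⁻¹ in K^b(A)/𝔻. -/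

import Mathlib

open CategoryTheory Limits Pretriangulated ZeroObject

universe v u v' u'

section TriangulatedPrelude

variable {C : Type u} [Category.{v} C] [HasZeroObject C] [HasShift C ℤ] [Preadditive C]
  [∀ n : ℤ, (shiftFunctor C n).Additive] [Pretriangulated C]

/-- The objects of the smallest strict full triangulated subcategory of `C`
containing the set of objects `B`. -/
inductive genSub (B : Set C) : C → Prop
  | of (X : C) (hX : X ∈ B) : genSub B X
  | zero (X : C) (hX : IsZero X) : genSub B X
  | shift (X : C) (n : ℤ) (hX : genSub B X) : genSub B (X⟦n⟧)
  | ext₂ (T : Triangle C) (hT : T ∈ distTriang C) (h₁ : genSub B T.obj₁)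
      (h₃ : genSub B T.obj₃) : genSub B T.obj₂

/-- The triangulated subcategory of `C` generated by `B`. -/
def genSubcat (B : Set C) : ObjectProperty C :=
  genSub B

instance (B : Set C) : (genSubcat B).IsTriangulated where
  exists_zero := ⟨0, isZero_zero _, genSub.zero _ (isZero_zero _)⟩
  isStableUnderShiftBy n := ⟨fun X h => genSub.shift X n h⟩
  ext₂' T hT h₁ h₃ := ObjectProperty.le_isoClosure _ _ (genSub.ext₂ T hT h₁ h₃)

/-- The extension-closure of a class of objects `E`: the smallest class containing `E`
and `0` and such that for any distinguished triangle `X ⟶ Y ⟶ Z` with `X, Z` in the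
class, `Y` is also in the class. -/
inductive extClosure (E : Set C) : C → Prop
  | of (X : C) (hX : X ∈ E) : extClosure E X
  | zero (X : C) (hX : IsZero X) : extClosure E X
  | ext₂ (T : Triangle C) (hT : T ∈ distTriang C) (h₁ : extClosure E T.obj₁)
      (h₃ : extClosure E T.obj₃) : extClosure E T.obj₂

/-- `D_{[i,j]}`: the extension-closure of `∪_{i ≤ l ≤ j} D[l]`. -/
def shiftClosure (D : Set C) (i j : ℤ) : Set C :=
  extClosure {X | ∃ (Y : C) (l : ℤ), i ≤ l ∧ l ≤ j ∧ Y ∈ D ∧ X = Y⟦l⟧}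

/-- `D_{≥ i} = ∪_{k ≥ i} D_{[i,k]}`. -/
def shiftClosureGE (D : Set C) (i : ℤ) : Set C := {X | ∃ k, i ≤ k ∧ X ∈ shiftClosure D i k}

/-- `D_{≤ j} = ∪_{k ≤ j} D_{[k,j]}`. -/
def shiftClosureLE (D : Set C) (j : ℤ) : Set C := {X | ∃ k, k ≤ j ∧ X ∈ shiftClosure D k j}

/-- A set of objects `D` is weakly negative if `0 ∈ D` and `Hom(X, Y[i]) = 0`
for all `X, Y ∈ D` and all `i ≥ 2`. -/
def WeaklyNegative (D : Set C) : Prop :=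
  (0 : C) ∈ D ∧ ∀ X ∈ D, ∀ Y ∈ D, ∀ i : ℤ, 2 ≤ i → ∀ f : X ⟶ (Y⟦i⟧), f = 0

end TriangulatedPrelude

attribute [local instance] Limits.hasBinaryBiproducts_of_finite_biproducts

section KPrelude

variable {A : Type u} [Category.{v} A] [Preadditive A] [HasZeroObject A] [HasFiniteBiproducts A]

/-- The two-term cochain complex with `P` in degree `n` and `Q` in degree `n + 1`,
with differential given by `f : P ⟶ Q` (and all other terms `0`).
In particular, `twoComplex (-1) f` is the cone of a morphism `f` of `A`. -/
noncomputable def twoComplex (n : ℤ) {P Q : A} (f : P ⟶ Q) : CochainComplex A ℤ where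
  X i := if i = n then P else if i = n + 1 then Q else 0
  d i j :=
    if hij : i = n ∧ j = n + 1 then
      eqToHom (by simp [hij.1]) ≫ f ≫
        eqToHom (by simp [hij.2, show ¬ ((n : ℤ) + 1 = n) by omega])
    else 0
  shape i j hij := by
    rw [dif_neg]
    rintro ⟨rfl, rfl⟩
    exact hij rfl
  d_comp_d' i j k _ _ := by
    by_cases h1 : i = n ∧ j = n + 1
    · by_cases h2 : j = n ∧ k = n + 1
      · obtain ⟨h1a, h1b⟩ := h1; obtain ⟨h2a, h2b⟩ := h2; omega
      · rw [dif_neg h2, comp_zero]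
    · rw [dif_neg h1, zero_comp]

/-- The chain map from the two-term complex (in degrees `n`, `n + 1`) determined by
`f : P ⟶ Q` to the complex concentrated in degree `n` with value `M`, whose degree `n`
component is `g : P ⟶ M`. -/
noncomputable def twoComplexToSingle (n : ℤ) {P Q M : A} (f : P ⟶ Q) (g : P ⟶ M) :
    twoComplex n f ⟶ (HomologicalComplex.single A (ComplexShape.up ℤ) n).obj M where
  f i :=
    if h : i = n then
      eqToHom (by simp [twoComplex, h]) ≫ g ≫
        (HomologicalComplex.singleObjXSelf (ComplexShape.up ℤ) n M).inv ≫ eqToHom (by rw [h])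
    else 0
  comm' i j hij := by
    simp only [ComplexShape.up_Rel] at hij
    by_cases hj : j = n
    · have hi : ¬ (i = n ∧ j = n + 1) := by rintro ⟨rfl, rfl⟩; omega
      have hd : (twoComplex n f).d i j = 0 := by
        dsimp [twoComplex]; rw [dif_neg hi]; rfl
      rw [hd, zero_comp]
      have : i ≠ n := by omega
      rw [dif_neg this, zero_comp]
    · rw [dif_neg hj]
      rw [comp_zero]
      have : ((HomologicalComplex.single A (ComplexShape.up ℤ) n).obj M).d i j = 0 := by simp
      rw [this, comp_zero]

/-- The quotient functor `C^b(A) ⥤ K(A)` (restricted from all complexes). -/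
noncomputable abbrev homotopyQ : CochainComplex A ℤ ⥤ HomotopyCategory A (ComplexShape.up ℤ) :=
  HomotopyCategory.quotient A (ComplexShape.up ℤ)

/-- The canonical embedding of `A` into the homotopy category, as complexes concentrated
in degree `0`. -/
noncomputable abbrev iotaA : A ⥤ HomotopyCategory A (ComplexShape.up ℤ) :=
  HomologicalComplex.single A (ComplexShape.up ℤ) 0 ⋙ homotopyQ

/-- `B`: the set of cones of elements of `S`, viewed in the homotopy category. -/
def coneSet (S : MorphismProperty A) : Set (HomotopyCategory A (ComplexShape.up ℤ)) :=
  {X | ∃ (P Q : A) (s : P ⟶ Q), S s ∧ X = homotopyQ.obj (twoComplex (-1) s)}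

/-- The Verdier localization functor of the homotopy category by the triangulated
subcategory `𝔻` generated by the cones of elements of `S`. -/
noncomputable abbrev locQ (S : MorphismProperty A) :
    HomotopyCategory A (ComplexShape.up ℤ) ⥤ (genSubcat (coneSet S)).trW.Localization :=
  (genSubcat (coneSet S)).trW.Q

/-- The composite functor `A ⥤ K(A) ⥤ K(A)/𝔻`. -/
noncomputable abbrev uBig (S : MorphismProperty A) :
    A ⥤ (genSubcat (coneSet S)).trW.Localization :=
  iotaA ⋙ locQ S

/-- `A[S⁻¹]_add`: the full subcategory of the Verdier quotient whose
objects are those of `A` (viewed as complexes concentrated in degree `0`). -/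
def AddLoc (S : MorphismProperty A) : Type u := A

noncomputable instance (S : MorphismProperty A) : Category (AddLoc S) where
  Hom X Y := (uBig S).obj X ⟶ (uBig S).obj Y
  id X := 𝟙 ((uBig S).obj X)
  comp f g := CategoryStruct.comp (obj := (genSubcat (coneSet S)).trW.Localization) f g

/-- The canonical functor `u : A ⥤ A[S⁻¹]_add` induced by the localization functor. -/
noncomputable def uFun (S : MorphismProperty A) : A ⥤ AddLoc S where
  obj X := X
  map f := (uBig S).map f
  map_id X := (uBig S).map_id X
  map_comp f g := (uBig S).map_comp f g

noncomputable instance (S : MorphismProperty A) : Preadditive (AddLoc S) where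
  homGroup X Y := inferInstanceAs (AddCommGroup ((uBig S).obj X ⟶ (uBig S).obj Y))
  add_comp P Q R f f' g :=
    @Preadditive.add_comp _ _ _ ((uBig S).obj P) ((uBig S).obj Q) ((uBig S).obj R) f f' g
  comp_add P Q R f g g' :=
    @Preadditive.comp_add _ _ _ ((uBig S).obj P) ((uBig S).obj Q) ((uBig S).obj R) f g g'

end KPrelude

/-- The differential of the complex `LT`: the matrix morphism
`L⁰ ⊕ T⁰ ⟶ L¹ ⊕ T¹ ⊕ B` with rows `(d⁰_L, 0)`, `(0, d⁰_T)`, `(f⁰, −t⁰)`. -/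
noncomputable def matrixLT {A : Type u} [Category.{v} A] [Preadditive A] [HasZeroObject A]
    [HasFiniteBiproducts A]
    {L₀ L₁ T₀ T₁ B₀ : A} (dL : L₀ ⟶ L₁) (dT : T₀ ⟶ T₁) (f₀ : L₀ ⟶ B₀) (t₀ : T₀ ⟶ B₀) :
    (L₀ ⊞ T₀ : A) ⟶ (L₁ ⊞ (T₁ ⊞ B₀) : A) :=
  biprod.desc (biprod.lift dL (biprod.lift 0 f₀))
    (biprod.lift 0 (biprod.lift dT (-t₀)))

/-!
The complex `LT` is a homotopy fibre product of `f : L ⟶ B` and `t : T ⟶ B`. The extra summand `B`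
in degree one provides a homotopy between `LT ⟶ L ⟶ B` and `LT ⟶ T ⟶ B`. The projection `LT ⟶ L`
is a degreewise split epimorphism whose kernel `T⁰ ⟶ T¹ ⊞ B` is a shift of the cone of `t`, so the
cone of this projection lies in `𝔻` along with that of `t`. Since `q` factors as `LT ⟶ L ⟶ A` and
`r` as `LT ⟶ T ⟶ C`, the formula for `ψ ∘ φ` is the usual composition of roofs.
-/

section

variable {A : Type u} [Category.{v} A] [Preadditive A] [HasBinaryBiproducts A]

/-- The splitting of `Q ⟶ P ⊞ Q ⟶ P`, the mirror image of
`ShortComplex.Splitting.ofHasBinaryBiproduct`. -/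
noncomputable def splittingInrFst (P Q : A) :
    (ShortComplex.mk (biprod.inr : Q ⟶ P ⊞ Q) biprod.fst biprod.inr_fst).Splitting where
  r := biprod.snd
  s := biprod.inl
  id := (add_comm _ _).trans biprod.total

lemma trianglehOfDegreewiseSplit_distinguished [HasZeroObject A]
    (X : ShortComplex (CochainComplex A ℤ))
    (σ : ∀ i, (X.map (HomologicalComplex.eval A (ComplexShape.up ℤ) i)).Splitting) :
    CochainComplex.trianglehOfDegreewiseSplit X σ ∈
      distTriang (HomotopyCategory A (ComplexShape.up ℤ)) :=
  (HomotopyCategory.distinguished_iff_iso_trianglehOfDegreewiseSplit _).2 ⟨X, σ, ⟨Iso.refl _⟩⟩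

lemma trW_homOfDegreewiseSplit_iff [HasZeroObject A]
    (D : ObjectProperty (HomotopyCategory A (ComplexShape.up ℤ))) [D.IsTriangulated]
    [D.IsClosedUnderIsomorphisms] (X : ShortComplex (CochainComplex A ℤ))
    (σ : ∀ i, (X.map (HomologicalComplex.eval A (ComplexShape.up ℤ) i)).Splitting) :
    D.trW (homotopyQ.map (CochainComplex.homOfDegreewiseSplit X σ)) ↔ D (homotopyQ.obj X.X₂) :=
  (MorphismProperty.cancel_right_of_respectsIso D.trW _
      ((homotopyQ.commShiftIso (1 : ℤ)).hom.app X.X₁)).symm.trans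
    (D.trW_iff_of_distinguished' _
      (rot_of_distTriang _ (trianglehOfDegreewiseSplit_distinguished X σ)))

end

namespace twoComplex

variable {A : Type u} [Category.{v} A] [Preadditive A] [HasZeroObject A] (n : ℤ)

section Terms

variable {P Q : A} (d : P ⟶ Q) {i : ℤ}

/-- The lower of the two possibly nonzero terms of `twoComplex n d`. -/
noncomputable def XIsoLeft (h : i = n) : (twoComplex n d).X i ≅ P :=
  eqToIso (by simp [twoComplex, h])

/-- The upper of the two possibly nonzero terms of `twoComplex n d`. -/
noncomputable def XIsoRight (h : i = n + 1) : (twoComplex n d).X i ≅ Q :=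
  eqToIso (by simp [twoComplex, h])

lemma isZero_X (h : i ≠ n) (h' : i ≠ n + 1) : IsZero ((twoComplex n d).X i) := by
  simpa only [twoComplex, h, h', if_false] using isZero_zero A

lemma d_eq {j : ℤ} (h : i = n) (h' : j = n + 1) :
    (twoComplex n d).d i j = (XIsoLeft n d h).hom ≫ d ≫ (XIsoRight n d h').inv :=
  dif_pos ⟨h, h'⟩

lemma d_eq_zero {j : ℤ} (h : i ≠ n) : (twoComplex n d).d i j = 0 :=
  dif_neg fun h' ↦ h h'.1

lemma toSingle_f {M : A} (g : P ⟶ M) :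
    (twoComplexToSingle n d g).f n = (XIsoLeft n d rfl).hom ≫ g ≫
      (HomologicalComplex.singleObjXSelf (ComplexShape.up ℤ) n M).inv := by
  simp [twoComplexToSingle, XIsoLeft]

end Terms

section Maps

variable {P Q P' Q' P'' Q'' : A} (d : P ⟶ Q) (d' : P' ⟶ Q') (d'' : P'' ⟶ Q'')

/-- The map of graded objects underlying two-term complexes with components `a` and `b`,
which need not commute with the differentials. -/
noncomputable def mapX (a : P ⟶ P') (b : Q ⟶ Q') (i : ℤ) :
    (twoComplex n d).X i ⟶ (twoComplex n d').X i :=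
  if h : i = n then (XIsoLeft n d h).hom ≫ a ≫ (XIsoLeft n d' h).inv
  else if h : i = n + 1 then (XIsoRight n d h).hom ≫ b ≫ (XIsoRight n d' h).inv
  else 0

lemma mapX_left (a : P ⟶ P') (b : Q ⟶ Q') {i : ℤ} (h : i = n) :
    mapX n d d' a b i = (XIsoLeft n d h).hom ≫ a ≫ (XIsoLeft n d' h).inv :=
  dif_pos h

lemma mapX_right (a : P ⟶ P') (b : Q ⟶ Q') {i : ℤ} (h : i = n + 1) :
    mapX n d d' a b i = (XIsoRight n d h).hom ≫ b ≫ (XIsoRight n d' h).inv := by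
  rw [mapX, dif_neg (by lia), dif_pos h]

lemma mapX_comp (a : P ⟶ P') (b : Q ⟶ Q') (a' : P' ⟶ P'') (b' : Q' ⟶ Q'') (i : ℤ) :
    mapX n d d' a b i ≫ mapX n d' d'' a' b' i = mapX n d d'' (a ≫ a') (b ≫ b') i := by
  unfold mapX
  split_ifs <;> simp

lemma mapX_add (a a' : P ⟶ P') (b b' : Q ⟶ Q') (i : ℤ) :
    mapX n d d' a b i + mapX n d d' a' b' i = mapX n d d' (a + a') (b + b') i := by
  unfold mapX
  split_ifs <;> simp

lemma mapX_id (i : ℤ) : mapX n d d (𝟙 P) (𝟙 Q) i = 𝟙 _ := by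
  unfold mapX
  split_ifs with h h'
  · simp
  · simp
  · exact (isZero_X n d h h').eq_of_src _ _

lemma mapX_zero (i : ℤ) : mapX n d d' 0 0 i = 0 := by
  unfold mapX
  split_ifs <;> simp

variable {d d'}

/-- The chain map between two-term complexes given by a commutative square. -/
noncomputable def map (a : P ⟶ P') (b : Q ⟶ Q') (w : a ≫ d' = d ≫ b) :
    twoComplex n d ⟶ twoComplex n d' where
  f := mapX n d d' a b
  comm' i j hij := by
    obtain rfl : i + 1 = j := hij
    by_cases h : i = n
    · subst h
      simp [d_eq, mapX_left, mapX_right, reassoc_of% w]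
    · simp [d_eq_zero _ _ h]

lemma map_comp_toSingle (a : P ⟶ P') (b : Q ⟶ Q') (w : a ≫ d' = d ≫ b) {M : A} (g : P' ⟶ M) :
    map n a b w ≫ twoComplexToSingle n d' g = twoComplexToSingle n d (a ≫ g) := by
  apply HomologicalComplex.to_single_hom_ext
  simp [map, mapX_left, toSingle_f]

lemma homotopyQ_map_toSingle_eq {M : A} {g g' : P ⟶ M} (h : Q ⟶ M) (hg : g = d ≫ h + g') :
    homotopyQ.map (twoComplexToSingle n d g) = homotopyQ.map (twoComplexToSingle n d g') := by
  let H (i j : ℤ) (hij : (ComplexShape.up ℤ).Rel j i) : (twoComplex n d).X i ⟶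
      ((HomologicalComplex.single A (ComplexShape.up ℤ) n).obj M).X j :=
    if hj : j = n then (XIsoRight n d (hij.symm.trans (by rw [hj]))).hom ≫ h ≫
      (HomologicalComplex.singleObjXIsoOfEq (ComplexShape.up ℤ) n M j hj).inv
    else 0
  suffices twoComplexToSingle n d g =
      Homotopy.nullHomotopicMap' H + twoComplexToSingle n d g' by
    rw [this, Functor.map_add, HomotopyCategory.eq_of_homotopy _ 0 (Homotopy.nullHomotopy' H),
      Functor.map_zero, zero_add]
  apply HomologicalComplex.to_single_hom_ext
  have hH : H (n + 1) n rfl = (XIsoRight n d rfl).hom ≫ h ≫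
      (HomologicalComplex.singleObjXSelf (ComplexShape.up ℤ) n M).inv := dif_pos rfl
  rw [HomologicalComplex.add_f_apply, Homotopy.nullHomotopicMap'_f (k₂ := n - 1) (k₀ := n + 1)
    (by simp) rfl, hH]
  simp [toSingle_f, d_eq, hg]

end Maps

section ShortExact

variable {X Y : ShortComplex A} (φ : X ⟶ Y)

/-- A morphism of short complexes, seen as a short complex of two-term complexes. -/
noncomputable abbrev shortComplex : ShortComplex (CochainComplex A ℤ) :=
  ShortComplex.mk (map n X.f Y.f φ.comm₁₂.symm) (map n X.g Y.g φ.comm₂₃.symm) (by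
    ext i
    simp [map, mapX_comp, mapX_zero])

/-- Splittings of the source and of the target, which need not be compatible with the morphism
between them, split the associated short complex of two-term complexes in each degree. -/
noncomputable def splitting (σ : X.Splitting) (τ : Y.Splitting) (i : ℤ) :
    ((shortComplex n φ).map (HomologicalComplex.eval A (ComplexShape.up ℤ) i)).Splitting where
  r := mapX n φ.τ₂ φ.τ₁ σ.r τ.r i
  s := mapX n φ.τ₃ φ.τ₂ σ.s τ.s i
  f_r := by
    change mapX n φ.τ₁ φ.τ₂ X.f Y.f i ≫ mapX n φ.τ₂ φ.τ₁ σ.r τ.r i = 𝟙 _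
    rw [mapX_comp, σ.f_r, τ.f_r, mapX_id]
  s_g := by
    change mapX n φ.τ₃ φ.τ₂ σ.s τ.s i ≫ mapX n φ.τ₂ φ.τ₃ X.g Y.g i = 𝟙 _
    rw [mapX_comp, σ.s_g, τ.s_g, mapX_id]
  id := by
    change mapX n φ.τ₂ φ.τ₁ σ.r τ.r i ≫ mapX n φ.τ₁ φ.τ₂ X.f Y.f i +
      mapX n φ.τ₂ φ.τ₃ X.g Y.g i ≫ mapX n φ.τ₃ φ.τ₂ σ.s τ.s i = 𝟙 _
    rw [mapX_comp, mapX_comp, mapX_add, σ.id, τ.id, mapX_id]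

lemma homOfDegreewiseSplit_f (σ : X.Splitting) (τ : Y.Splitting) :
    (CochainComplex.homOfDegreewiseSplit _ (splitting n φ σ τ)).f n =
      (XIsoLeft n φ.τ₃ rfl).hom ≫ (σ.s ≫ φ.τ₂ ≫ τ.r) ≫ (XIsoRight n φ.τ₁ rfl).inv := by
  have h : mapX n φ.τ₃ φ.τ₂ σ.s τ.s n ≫ (twoComplex n φ.τ₂).d n (n + 1) ≫
      mapX n φ.τ₂ φ.τ₁ σ.r τ.r (n + 1) =
      (XIsoLeft n φ.τ₃ rfl).hom ≫ (σ.s ≫ φ.τ₂ ≫ τ.r) ≫ (XIsoRight n φ.τ₁ rfl).inv := by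
    simp [d_eq, mapX_left, mapX_right]
  exact (CochainComplex.homOfDegreewiseSplit_f _ _ n).trans h

end ShortExact

/-- The two-term complex with zero lower term is, up to a shift, the complex concentrated in
the lower degree. -/
noncomputable def shiftIsoSingle (M : A) :
    (twoComplex n (0 : (0 : A) ⟶ M))⟦(1 : ℤ)⟧ ≅
      (HomologicalComplex.single A (ComplexShape.up ℤ) n).obj M :=
  have isZero_X_succ (i : ℤ) (hi : i ≠ n) :
      IsZero ((twoComplex n (0 : (0 : A) ⟶ M)).X (i + 1)) := by
    by_cases h : i + 1 = n
    · exact (isZero_zero A).of_iso (XIsoLeft n _ h)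
    · exact isZero_X n _ h (by lia)
  HomologicalComplex.Hom.isoOfComponents
    (fun i ↦ if hi : i = n then
        XIsoRight n (0 : (0 : A) ⟶ M) (congrArg (· + 1) hi) ≪≫
          (HomologicalComplex.singleObjXIsoOfEq (ComplexShape.up ℤ) n M i hi).symm
      else (isZero_X_succ i hi).iso (HomologicalComplex.isZero_single_obj_X _ _ _ _ hi))
    (fun i j hij ↦ by
      obtain rfl : i + 1 = j := hij
      by_cases hi : i = n
      · exact (HomologicalComplex.isZero_single_obj_X _ _ _ _ (by lia)).eq_of_tgt _ _
      · exact (isZero_X_succ i hi).eq_of_src _ _)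

lemma shiftIsoSingle_hom_f (M : A) :
    (shiftIsoSingle n M).hom.f n = (XIsoRight n (0 : (0 : A) ⟶ M) rfl).hom ≫
      (HomologicalComplex.singleObjXSelf (ComplexShape.up ℤ) n M).inv :=
  congrArg Iso.hom (dif_pos (c := n = n) rfl)

section Triangulated

variable [HasBinaryBiproducts A]

variable (D : ObjectProperty (HomotopyCategory A (ComplexShape.up ℤ))) [D.IsTriangulated]
  [D.IsClosedUnderIsomorphisms]

lemma trW_map_iff {X Y : ShortComplex A} (φ : X ⟶ Y) (σ : X.Splitting) (τ : Y.Splitting) :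
    D.trW (homotopyQ.map (map n X.g Y.g φ.comm₂₃.symm)) ↔
      D (homotopyQ.obj (twoComplex n φ.τ₁)) :=
  D.trW_iff_of_distinguished' _
    (trianglehOfDegreewiseSplit_distinguished _ (splitting n φ σ τ))

lemma trW_toSingle_iff {P Q M : A} (d : P ⟶ Q) (g : P ⟶ M) :
    D.trW (homotopyQ.map (twoComplexToSingle n d g)) ↔
      D (homotopyQ.obj (twoComplex n (biprod.lift d (-g)))) := by
  -- Up to sign, `g` is the connecting morphism of the degreewise split sequence
  -- `M[-n-1] ⟶ twoComplex n (biprod.lift d (-g)) ⟶ twoComplex n d`.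
  let X : ShortComplex A := ShortComplex.mk (0 : 0 ⟶ P) (𝟙 P) (by simp)
  let φ : X ⟶ ShortComplex.mk (biprod.inr : M ⟶ Q ⊞ M) biprod.fst biprod.inr_fst :=
    { τ₁ := 0, τ₂ := biprod.lift d (-g), τ₃ := d }
  let σ : X.Splitting := .ofIsZeroOfIsIso _ (isZero_zero A) inferInstance
  let split := splitting n φ σ (splittingInrFst Q M)
  let δ : twoComplex n d ⟶ (twoComplex n (0 : 0 ⟶ M))⟦(1 : ℤ)⟧ :=
    CochainComplex.homOfDegreewiseSplit _ split
  have hδ : δ ≫ (shiftIsoSingle n M).hom = -twoComplexToSingle n d g := by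
    apply HomologicalComplex.to_single_hom_ext
    have h : σ.s ≫ φ.τ₂ ≫ (splittingInrFst Q M).r = -g := by
      simp [σ, φ, splittingInrFst, ShortComplex.Splitting.ofIsZeroOfIsIso, X]
    rw [HomologicalComplex.comp_f, homOfDegreewiseSplit_f, h, shiftIsoSingle_hom_f]
    simp [toSingle_f, φ]
  calc D.trW (homotopyQ.map (twoComplexToSingle n d g))
    _ ↔ D.trW (homotopyQ.map (δ ≫ (shiftIsoSingle n M).hom)) := by
        rw [hδ, Functor.map_neg, ← D.smul_mem_trW_iff _ (-1), Units.neg_smul, one_smul]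
    _ ↔ D.trW (homotopyQ.map δ) := by
        rw [Functor.map_comp]
        exact MorphismProperty.cancel_right_of_respectsIso _ _ _
    _ ↔ D (homotopyQ.obj (twoComplex n (biprod.lift d (-g)))) :=
        trW_homOfDegreewiseSplit_iff D _ split

end Triangulated

end twoComplex

namespace matrixLT

open twoComplex

variable {A : Type u} [Category.{v} A] [Preadditive A] [HasZeroObject A] [HasFiniteBiproducts A]
  {L₀ L₁ T₀ T₁ B₀ : A} (n : ℤ) (dL : L₀ ⟶ L₁) (dT : T₀ ⟶ T₁) (f₀ : L₀ ⟶ B₀) (t₀ : T₀ ⟶ B₀)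

/-- The projection of the complex `LT` onto `L`. -/
noncomputable def toL : twoComplex n (matrixLT dL dT f₀ t₀) ⟶ twoComplex n dL :=
  map n biprod.fst biprod.fst (by ext <;> simp [matrixLT])

/-- The projection of the complex `LT` onto `T`. -/
noncomputable def toT : twoComplex n (matrixLT dL dT f₀ t₀) ⟶ twoComplex n dT :=
  map n biprod.snd (biprod.snd ≫ biprod.fst) (by ext <;> simp [matrixLT])

lemma toL_comp_toSingle {M : A} (g : L₀ ⟶ M) :
    toL n dL dT f₀ t₀ ≫ twoComplexToSingle n dL g =
      twoComplexToSingle n (matrixLT dL dT f₀ t₀) (biprod.desc g 0) := by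
  rw [toL, map_comp_toSingle]
  congr 1
  ext <;> simp

lemma toT_comp_toSingle {M : A} (g : T₀ ⟶ M) :
    toT n dL dT f₀ t₀ ≫ twoComplexToSingle n dT g =
      twoComplexToSingle n (matrixLT dL dT f₀ t₀) (biprod.desc 0 g) := by
  rw [toT, map_comp_toSingle]
  congr 1
  ext <;> simp

lemma homotopyQ_map_toL_comp_eq_toT_comp :
    homotopyQ.map (toL n dL dT f₀ t₀) ≫ homotopyQ.map (twoComplexToSingle n dL f₀) =
      homotopyQ.map (toT n dL dT f₀ t₀) ≫ homotopyQ.map (twoComplexToSingle n dT t₀) := by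
  rw [← Functor.map_comp, ← Functor.map_comp, toL_comp_toSingle, toT_comp_toSingle]
  exact homotopyQ_map_toSingle_eq n (biprod.snd ≫ biprod.snd) (by ext <;> simp [matrixLT])

lemma trW_toL_iff (D : ObjectProperty (HomotopyCategory A (ComplexShape.up ℤ)))
    [D.IsTriangulated] [D.IsClosedUnderIsomorphisms] :
    D.trW (homotopyQ.map (toL n dL dT f₀ t₀)) ↔
      D.trW (homotopyQ.map (twoComplexToSingle n dT t₀)) := by
  rw [trW_toSingle_iff]
  let φ : ShortComplex.mk (biprod.inr : T₀ ⟶ L₀ ⊞ T₀) biprod.fst biprod.inr_fst ⟶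
      ShortComplex.mk (biprod.inr : T₁ ⊞ B₀ ⟶ L₁ ⊞ (T₁ ⊞ B₀)) biprod.fst biprod.inr_fst :=
    { τ₁ := biprod.lift dT (-t₀)
      τ₂ := matrixLT dL dT f₀ t₀
      τ₃ := dL
      comm₁₂ := by ext <;> simp [matrixLT]
      comm₂₃ := by ext <;> simp [matrixLT] }
  exact trW_map_iff n D φ (splittingInrFst _ _) (splittingInrFst _ _)

end matrixLT

theorem statement9_general {A : Type u} [Category.{v} A] [Preadditive A] [HasZeroObject A]
    [HasFiniteBiproducts A] (D : ObjectProperty (HomotopyCategory A (ComplexShape.up ℤ)))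
    [D.IsTriangulated] {E : Type u'} [Category.{v'} E]
    (F : HomotopyCategory A (ComplexShape.up ℤ) ⥤ E) (hF : D.trW.IsInvertedBy F) (n : ℤ)
    {A₀ B₀ C₀ L₀ L₁ T₀ T₁ : A} (dL : L₀ ⟶ L₁) (dT : T₀ ⟶ T₁)
    (s₀ : L₀ ⟶ A₀) (f₀ : L₀ ⟶ B₀) (t₀ : T₀ ⟶ B₀) (g₀ : T₀ ⟶ C₀)
    (hs : D.trW (homotopyQ.map (twoComplexToSingle n dL s₀)))
    (ht : D.trW (homotopyQ.map (twoComplexToSingle n dT t₀)))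
    (φ : F.obj (homotopyQ.obj ((HomologicalComplex.single A (ComplexShape.up ℤ) n).obj A₀)) ⟶
      F.obj (homotopyQ.obj ((HomologicalComplex.single A (ComplexShape.up ℤ) n).obj B₀)))
    (ψ : F.obj (homotopyQ.obj ((HomologicalComplex.single A (ComplexShape.up ℤ) n).obj B₀)) ⟶
      F.obj (homotopyQ.obj ((HomologicalComplex.single A (ComplexShape.up ℤ) n).obj C₀)))
    (hφ : F.map (homotopyQ.map (twoComplexToSingle n dL s₀)) ≫ φ =
      F.map (homotopyQ.map (twoComplexToSingle n dL f₀)))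
    (hψ : F.map (homotopyQ.map (twoComplexToSingle n dT t₀)) ≫ ψ =
      F.map (homotopyQ.map (twoComplexToSingle n dT g₀))) :
    D.trW (homotopyQ.map
      (twoComplexToSingle n (matrixLT dL dT f₀ t₀) (biprod.desc s₀ 0))) ∧
    IsIso (F.map (homotopyQ.map
      (twoComplexToSingle n (matrixLT dL dT f₀ t₀) (biprod.desc s₀ 0)))) ∧
    F.map (homotopyQ.map
        (twoComplexToSingle n (matrixLT dL dT f₀ t₀) (biprod.desc s₀ 0))) ≫ φ ≫ ψ =
      F.map (homotopyQ.map
        (twoComplexToSingle n (matrixLT dL dT f₀ t₀) (biprod.desc 0 g₀))) := by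
  rw [← matrixLT.toL_comp_toSingle, ← matrixLT.toT_comp_toSingle, homotopyQ.map_comp,
    homotopyQ.map_comp]
  have hL : D.trW (homotopyQ.map (matrixLT.toL n dL dT f₀ t₀)) := by
    rw [← D.trW_isoClosure] at ht ⊢
    exact (matrixLT.trW_toL_iff n dL dT f₀ t₀ _).2 ht
  have hq := D.trW.comp_mem _ _ hL hs
  refine ⟨hq, hF _ hq, ?_⟩
  have hLT := congrArg F.map (matrixLT.homotopyQ_map_toL_comp_eq_toT_comp n dL dT f₀ t₀)
  rw [F.map_comp, F.map_comp] at hLT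
  rw [F.map_comp, F.map_comp, Category.assoc, reassoc_of% hφ, reassoc_of% hLT, hψ]

/-- Lemma: composition of roofs `φ = f ∘ s⁻¹` and `ψ = g ∘ t⁻¹` in `K^b(A)/𝔻`, where the
domains of `s` and `t` are the two-term complexes (in degrees 0 and 1) determined by
`dL` and `dT`: the composite `ψ ∘ φ` equals `r ∘ q⁻¹`, where `q` and `r` are the
morphisms out of the complex `LT` whose degree zero components are `(s⁰, 0)` and
`(0, g⁰)` respectively, and the cone of `q` lies in `𝔻`. -/
theorem statement9 {A : Type u} [Category.{v} A] [Preadditive A] [HasZeroObject A]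
    [HasFiniteBiproducts A] (S : MorphismProperty A)
    (A₀ B₀ C₀ L₀ L₁ T₀ T₁ : A) (dL : L₀ ⟶ L₁) (dT : T₀ ⟶ T₁)
    (s₀ : L₀ ⟶ A₀) (f₀ : L₀ ⟶ B₀) (t₀ : T₀ ⟶ B₀) (g₀ : T₀ ⟶ C₀)
    (hs : (genSubcat (coneSet S)).trW (homotopyQ.map (twoComplexToSingle 0 dL s₀)))
    (ht : (genSubcat (coneSet S)).trW (homotopyQ.map (twoComplexToSingle 0 dT t₀)))
    (φ : (uBig S).obj A₀ ⟶ (uBig S).obj B₀) (ψ : (uBig S).obj B₀ ⟶ (uBig S).obj C₀)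
    (hφ : (locQ S).map (homotopyQ.map (twoComplexToSingle 0 dL s₀)) ≫ φ =
      (locQ S).map (homotopyQ.map (twoComplexToSingle 0 dL f₀)))
    (hψ : (locQ S).map (homotopyQ.map (twoComplexToSingle 0 dT t₀)) ≫ ψ =
      (locQ S).map (homotopyQ.map (twoComplexToSingle 0 dT g₀))) :
    (genSubcat (coneSet S)).trW (homotopyQ.map
      (twoComplexToSingle 0 (matrixLT dL dT f₀ t₀) (biprod.desc s₀ 0))) ∧
    IsIso ((locQ S).map (homotopyQ.map
      (twoComplexToSingle 0 (matrixLT dL dT f₀ t₀) (biprod.desc s₀ 0)))) ∧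
    (locQ S).map (homotopyQ.map
        (twoComplexToSingle 0 (matrixLT dL dT f₀ t₀) (biprod.desc s₀ 0))) ≫ (φ ≫ ψ) =
      (locQ S).map (homotopyQ.map
        (twoComplexToSingle 0 (matrixLT dL dT f₀ t₀) (biprod.desc 0 g₀))) :=
  statement9_general _ (locQ S) (Localization.inverts _ _) 0 dL dT s₀ f₀ t₀ g₀ hs ht φ ψ hφ hψ
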